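/- For every h = (h₁,…,h_n) ∈ Π_{i=1}^n A_i the function Σh belongs to H_w⁰ (Σh is absolutely continuous with ∫₀^∞ ((Σh)'(x))² w(x) dx < ∞ and Σh(x) → 0 as x → ∞), and there exists a constant C₅ > 0, depending only on w, n and the functions Ψ₁,…,Ψ_n, such that for all g = (g₁,…,g_n) and h = (h₁,…,h_n) in Π_{i=1}^n A_i: ‖Σg − Σh‖_w ≤ C₅ Σ_{i=1}^n (1 + ‖h_i‖_w + ‖g_i‖_w + ‖g_i‖²_w) ‖g_i − h_i‖_w. In particular, Σ : Π_{i=1}^n A_i → H_w⁰ is continuous. -/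

import Mathlib

open MeasureTheory Set Real Filter ENNReal

/-- A weight: a nondecreasing `C¹` function `w : ℝ₊ → [1,∞)` with `w^{-1/3} ∈ L¹(ℝ₊)`. -/
def IsWeight (w : ℝ → ℝ) : Prop :=
  (∀ x, 0 ≤ x → 1 ≤ w x) ∧ MonotoneOn w (Set.Ici 0) ∧ ContDiffOn ℝ 1 w (Set.Ici 0) ∧
    MeasureTheory.IntegrableOn (fun x => w x ^ (-(1 / 3 : ℝ))) (Set.Ioi 0)

/-- Membership in `H_w⁰`, carrying the weak derivative `f'` as data: `f` is absolutely
continuous on `ℝ₊` with locally integrable weak derivative `f'`, has finite weighted energy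
`∫₀^∞ f'(x)² w(x) dx < ∞`, and `f(x) → 0` as `x → ∞`. -/
def MemHw0 (w f f' : ℝ → ℝ) : Prop :=
  (∀ x, 0 ≤ x → IntervalIntegrable f' MeasureTheory.volume 0 x) ∧
  (∀ x, 0 ≤ x → f x = f 0 + ∫ y in (0 : ℝ)..x, f' y) ∧
  (∫⁻ x in Set.Ioi (0 : ℝ), ENNReal.ofReal (f' x ^ 2 * w x)) < ⊤ ∧
  Filter.Tendsto f Filter.atTop (nhds 0)

/-- The norm `‖f‖_w` of an element of `H_w⁰` (where `f(∞) = 0`), expressed through its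
weak derivative: `‖f‖_w = (∫₀^∞ f'(x)² w(x) dx)^{1/2}`. -/
noncomputable def nw (w f' : ℝ → ℝ) : ℝ :=
  Real.sqrt ((∫⁻ x in Set.Ioi (0 : ℝ), ENNReal.ofReal (f' x ^ 2 * w x)).toReal)

/-- `T f (x) = ∫₀ˣ f(η) dη`; membership `f ∈ A_i` means `-T f (x) ∈ [c,d]` for all `x ≥ 0`. -/
def InA (c d : ℝ) (f : ℝ → ℝ) : Prop :=
  ∀ x, 0 ≤ x → -(∫ y in (0 : ℝ)..x, f y) ∈ Set.Icc c d

/-- `Σh(x) = -Σᵢ hᵢ(x) Ψᵢ'(-∫₀ˣ hᵢ(η) dη)`. -/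
noncomputable def SigmaMap {n : ℕ} (Ψ : Fin n → ℝ → ℝ) (h : Fin n → ℝ → ℝ) (x : ℝ) : ℝ :=
  -∑ i, h i x * deriv (Ψ i) (-(∫ y in (0 : ℝ)..x, h i y))

/-- The (weak) derivative of `Σh`:
`(Σh)'(x) = Σᵢ (-hᵢ'(x) Ψᵢ'(-∫₀ˣ hᵢ) + hᵢ(x)² Ψᵢ''(-∫₀ˣ hᵢ))`. -/
noncomputable def SigmaDeriv {n : ℕ} (Ψ : Fin n → ℝ → ℝ) (h h' : Fin n → ℝ → ℝ) (x : ℝ) : ℝ :=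
  ∑ i, (-(h' i x) * deriv (Ψ i) (-(∫ y in (0 : ℝ)..x, h i y))
        + h i x ^ 2 * deriv (deriv (Ψ i)) (-(∫ y in (0 : ℝ)..x, h i y)))

/-!
The weighted norm of `f ∈ H_w⁰` is the norm of `f'` in `L²(w dx)`. Put `v = w^{-1/3}`, which is
integrable and nonincreasing. Since `f(x) = -∫ₓ^∞ f'` and `w⁻¹ = v³ ≤ v(x) v²` on `(x, ∞)`, the
Cauchy–Schwarz inequality in `L²(w dx)` gives `|f| ≤ K ‖f‖_w v` with `K = ‖v²‖_{L²(w dx)} < ∞`.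
Hence primitives of `f` are bounded by `K ‖v‖_{L¹} ‖f‖_w`, and a product `f g` of two elements of
`H_w⁰` lies in `L²(w dx)` with norm at most `K³ ‖f‖_w ‖g‖_w`. The derivative of
`-h Ψ'(-∫₀ˣ h)` is `-h' P + h² Q` with `P`, `Q` bounded and Lipschitz in the primitive of `h`, so
the estimate follows from `a f - b g = (a - b) f + b (f - g)` applied to both terms.
-/

section LpNorm

variable {α E F : Type*} {mα : MeasurableSpace α} [NormedAddCommGroup E] [NormedAddCommGroup F]
  {μ : Measure α} {p : ℝ≥0∞}

lemma lpNorm_mono_ae_real {f : α → E} {g : α → ℝ} (hg : MemLp g p μ)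
    (hfg : ∀ᵐ x ∂μ, ‖f x‖ ≤ g x) : lpNorm f p μ ≤ lpNorm g p μ := by
  by_cases hf : AEStronglyMeasurable f μ
  · rw [← toReal_eLpNorm hf, ← toReal_eLpNorm hg.1]
    exact ENNReal.toReal_mono hg.2.ne (eLpNorm_mono_ae_real hfg)
  · rw [lpNorm_of_not_aestronglyMeasurable hf]
    exact lpNorm_nonneg

lemma lpNorm_const_mul (c : ℝ) (f : α → ℝ) :
    lpNorm (fun x => c * f x) p μ = |c| * lpNorm f p μ := by
  simpa [Pi.smul_def] using lpNorm_const_smul c f μ (p := p)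

lemma lpNorm_le_mul_of_ae_le_mul {f : α → E} {g : α → F} {c : ℝ} (hc : 0 ≤ c) (hg : MemLp g p μ)
    (hfg : ∀ᵐ x ∂μ, ‖f x‖ ≤ c * ‖g x‖) : lpNorm f p μ ≤ c * lpNorm g p μ := by
  refine (lpNorm_mono_ae_real (hg.norm.const_mul c) hfg).trans_eq ?_
  rw [lpNorm_const_mul, abs_of_nonneg hc, lpNorm_norm hg.1]

lemma integral_norm_mul_norm_le_lpNorm_two_mul_lpNorm_two {f g : α → E} (hf : MemLp f 2 μ)
    (hg : MemLp g 2 μ) : ∫ x, ‖f x‖ * ‖g x‖ ∂μ ≤ lpNorm f 2 μ * lpNorm g 2 μ := by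
  simpa [lpNorm_eq_integral_norm_rpow_toReal, hf.1, hg.1] using
    integral_mul_norm_le_Lp_mul_Lq Real.HolderConjugate.two_two
      (by simpa using hf) (by simpa using hg)

lemma lpNorm_smul_sub_smul_le {𝕜 : Type*} [NormedField 𝕜] [NormedSpace 𝕜 E] {a b : α → 𝕜}
    {f g : α → E} {δ M : ℝ} (hp : 1 ≤ p) (hδ : 0 ≤ δ) (hM : 0 ≤ M) (hf : MemLp f p μ)
    (hg : MemLp g p μ) (hab : ∀ᵐ x ∂μ, ‖a x - b x‖ ≤ δ) (hb : ∀ᵐ x ∂μ, ‖b x‖ ≤ M) :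
    lpNorm (fun x => a x • f x - b x • g x) p μ
      ≤ δ * lpNorm f p μ + M * lpNorm (fun x => f x - g x) p μ := by
  have hδf : MemLp (fun x => δ * ‖f x‖) p μ := hf.norm.const_mul δ
  have hMfg : MemLp (fun x => M * ‖f x - g x‖) p μ := (hf.sub hg).norm.const_mul M
  calc lpNorm (fun x => a x • f x - b x • g x) p μ
      ≤ lpNorm ((fun x => δ * ‖f x‖) + fun x => M * ‖f x - g x‖) p μ := by
        refine lpNorm_mono_ae_real (hδf.add hMfg) ?_
        filter_upwards [hab, hb] with x hxab hxb
        rw [show a x • f x - b x • g x = (a x - b x) • f x + b x • (f x - g x) by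
          rw [sub_smul, smul_sub]; abel]
        refine norm_add_le_of_le ?_ ?_ <;> rw [norm_smul]
        · exact mul_le_mul_of_nonneg_right hxab (norm_nonneg _)
        · exact mul_le_mul_of_nonneg_right hxb (norm_nonneg _)
    _ ≤ _ := lpNorm_add_le hδf hp
    _ = _ := by
        rw [lpNorm_const_mul, lpNorm_const_mul, lpNorm_norm hf.1,
          lpNorm_norm (f := fun x => f x - g x) (hf.sub hg).1, abs_of_nonneg hδ, abs_of_nonneg hM]

end LpNorm

/-- The measure `w(x) dx` on `(0, ∞)`: the weighted norm `nw w` is the norm of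
`L²(weightMeasure w)`. -/
noncomputable def weightMeasure (w : ℝ → ℝ) : Measure ℝ :=
  (volume.restrict (Ioi 0)).withDensity fun x => ENNReal.ofReal (w x)

lemma nw_nonneg (w f : ℝ → ℝ) : 0 ≤ nw w f := Real.sqrt_nonneg _

section WeightMeasure

variable {w f : ℝ → ℝ}

lemma weightMeasure_absolutelyContinuous (w : ℝ → ℝ) :
    weightMeasure w ≪ volume.restrict (Ioi 0) :=
  withDensity_absolutelyContinuous _ _

lemma ae_weightMeasure_of_forall_pos {P : ℝ → Prop} (h : ∀ x, 0 < x → P x) :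
    ∀ᵐ x ∂weightMeasure w, P x :=
  (weightMeasure_absolutelyContinuous w).ae_le ((ae_restrict_mem measurableSet_Ioi).mono h)

lemma lintegral_sq_mul_eq_eLpNorm_sq (hw : AEMeasurable w (volume.restrict (Ioi 0))) :
    ∫⁻ x in Ioi 0, ENNReal.ofReal (f x ^ 2 * w x) = eLpNorm f 2 (weightMeasure w) ^ 2 := by
  have hsq := eLpNorm_nnreal_pow_eq_lintegral (μ := weightMeasure w) (f := f) two_ne_zero
  simp only [NNReal.coe_ofNat, ENNReal.rpow_ofNat, ENNReal.coe_ofNat] at hsq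
  rw [hsq, weightMeasure, lintegral_withDensity_eq_lintegral_mul_non_measurable₀ _
    hw.ennreal_ofReal (by simp)]
  refine lintegral_congr fun x => ?_
  rw [Pi.mul_apply, ← enorm_pow, Real.enorm_of_nonneg (sq_nonneg _),
    ENNReal.ofReal_mul (sq_nonneg _), mul_comm]

lemma nw_eq_lpNorm (hw : AEMeasurable w (volume.restrict (Ioi 0)))
    (hf : AEStronglyMeasurable f (weightMeasure w)) : nw w f = lpNorm f 2 (weightMeasure w) := by
  rw [nw, lintegral_sq_mul_eq_eLpNorm_sq hw, ENNReal.toReal_pow, Real.sqrt_sq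
    ENNReal.toReal_nonneg, toReal_eLpNorm hf]

end WeightMeasure

lemma absolutelyContinuousOnInterval_congr {X : Type*} [PseudoMetricSpace X] {f g : ℝ → X}
    {a b : ℝ} (hf : AbsolutelyContinuousOnInterval f a b) (hfg : EqOn f g (uIcc a b)) :
    AbsolutelyContinuousOnInterval g a b := by
  refine Tendsto.congr' (eventually_inf_principal.2 (Eventually.of_forall fun E hE => ?_)) hf
  refine Finset.sum_congr rfl fun i hi => ?_
  rw [hfg (hE.1 i hi).1, hfg (hE.1 i hi).2]

/-- `f` is locally absolutely continuous on `ℝ₊` with weak derivative `f'`. The integral form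
avoids a junk value of `f'` on a null set; values on the negative half-line play no role. -/
structure HasWeakDeriv (f f' : ℝ → ℝ) : Prop where
  intervalIntegrable : ∀ x, 0 ≤ x → IntervalIntegrable f' volume 0 x
  eq_add_integral : ∀ x, 0 ≤ x → f x = f 0 + ∫ y in (0 : ℝ)..x, f' y

namespace HasWeakDeriv

variable {f f' g g' : ℝ → ℝ}

lemma aestronglyMeasurable (hf : HasWeakDeriv f f') :
    AEStronglyMeasurable f' (volume.restrict (Ioi 0)) := by
  rw [← iUnion_Ioc_eq_Ioi_self_iff (f := fun n : ℕ => (n : ℝ)).2 fun x _ => exists_nat_ge x,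
    aestronglyMeasurable_iUnion_iff]
  exact fun n => (hf.intervalIntegrable n n.cast_nonneg).1.1

lemma absolutelyContinuousOnInterval (hf : HasWeakDeriv f f') {b : ℝ} (hb : 0 ≤ b) :
    AbsolutelyContinuousOnInterval f 0 b := by
  have hconst : AbsolutelyContinuousOnInterval (fun _ => f 0) 0 b :=
    (LipschitzWith.const (f 0)).lipschitzOnWith.absolutelyContinuousOnInterval
  refine absolutelyContinuousOnInterval_congr (hconst.add ((hf.intervalIntegrable b
    hb).absolutelyContinuousOnInterval_intervalIntegral left_mem_uIcc)) fun x hx => ?_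
  rw [uIcc_of_le hb] at hx
  exact (hf.eq_add_integral x hx.1).symm

lemma continuousOn (hf : HasWeakDeriv f f') : ContinuousOn f (Ici 0) := by
  intro x (hx : 0 ≤ x)
  have hx1 : 0 ≤ x + 1 := by linarith
  have hcont := (hf.absolutelyContinuousOnInterval hx1).continuousOn
  rw [uIcc_of_le hx1, ← Ici_inter_Iic] at hcont
  exact (hcont x ⟨hx, by simp⟩).mono_of_mem_nhdsWithin
    (inter_mem_nhdsWithin _ (Iic_mem_nhds (lt_add_one x)))

lemma intervalIntegrable_self (hf : HasWeakDeriv f f') {x : ℝ} (hx : 0 ≤ x) :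
    IntervalIntegrable f volume 0 x :=
  ContinuousOn.intervalIntegrable_of_Icc hx (hf.continuousOn.mono Icc_subset_Ici_self)

lemma sub_eq_integral (hf : HasWeakDeriv f f') {x y : ℝ} (hx : 0 ≤ x) (hy : 0 ≤ y) :
    f y - f x = ∫ t in x..y, f' t := by
  rw [hf.eq_add_integral x hx, hf.eq_add_integral y hy, add_sub_add_left_eq_sub,
    intervalIntegral.integral_interval_sub_left (hf.intervalIntegrable y hy)
      (hf.intervalIntegrable x hx)]

lemma ae_hasDerivAt (hf : HasWeakDeriv f f') :
    ∀ᵐ x, 0 < x → HasDerivAt f (f' x) x := by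
  have hprim : ∀ᵐ x, ∀ n : ℕ, x ∈ uIcc 0 (n : ℝ) → ∀ c ∈ uIcc 0 (n : ℝ),
      HasDerivAt (fun x => ∫ t in c..x, f' t) (f' x) x :=
    ae_all_iff.2 fun n => (hf.intervalIntegrable n n.cast_nonneg).ae_hasDerivAt_integral
  filter_upwards [hprim] with x hx hx0
  obtain ⟨n, hn⟩ := exists_nat_ge x
  have hxn : x ∈ uIcc 0 (n : ℝ) := by
    rw [uIcc_of_le n.cast_nonneg]
    exact ⟨hx0.le, hn⟩
  refine ((hx n hxn 0 left_mem_uIcc).const_add (f 0)).congr_of_eventuallyEq ?_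
  filter_upwards [Ioi_mem_nhds hx0] with y hy using hf.eq_add_integral y (le_of_lt hy)

lemma neg (hf : HasWeakDeriv f f') : HasWeakDeriv (fun x => -f x) (fun x => -f' x) where
  intervalIntegrable x hx := (hf.intervalIntegrable x hx).neg
  eq_add_integral x hx := by
    rw [intervalIntegral.integral_neg, hf.eq_add_integral x hx, neg_add]

lemma sub (hf : HasWeakDeriv f f') (hg : HasWeakDeriv g g') :
    HasWeakDeriv (fun x => f x - g x) (fun x => f' x - g' x) where
  intervalIntegrable x hx := (hf.intervalIntegrable x hx).sub (hg.intervalIntegrable x hx)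
  eq_add_integral x hx := by
    rw [intervalIntegral.integral_sub (hf.intervalIntegrable x hx) (hg.intervalIntegrable x hx),
      hf.eq_add_integral x hx, hg.eq_add_integral x hx, add_sub_add_comm]

lemma sum {ι : Type*} {s : Finset ι} {f f' : ι → ℝ → ℝ} (hf : ∀ i ∈ s, HasWeakDeriv (f i) (f' i)) :
    HasWeakDeriv (fun x => ∑ i ∈ s, f i x) (fun x => ∑ i ∈ s, f' i x) where
  intervalIntegrable x hx := by
    simpa only [Finset.sum_fn] using
      IntervalIntegrable.sum s fun i hi => (hf i hi).intervalIntegrable x hx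
  eq_add_integral x hx := by
    rw [intervalIntegral.integral_finsetSum fun i hi => (hf i hi).intervalIntegrable x hx,
      ← Finset.sum_add_distrib]
    exact Finset.sum_congr rfl fun i hi => (hf i hi).eq_add_integral x hx

lemma mul (hf : HasWeakDeriv f f') (hg : HasWeakDeriv g g') :
    HasWeakDeriv (fun x => f x * g x) (fun x => f' x * g x + f x * g' x) where
  intervalIntegrable x hx := by
    have hsub : uIcc 0 x ⊆ Ici 0 := by simpa [uIcc_of_le hx] using Icc_subset_Ici_self
    exact ((hf.intervalIntegrable x hx).mul_continuousOn (hg.continuousOn.mono hsub)).add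
      ((hg.intervalIntegrable x hx).continuousOn_mul (hf.continuousOn.mono hsub))
  eq_add_integral x hx := by
    rw [← sub_eq_iff_eq_add', ← (hf.absolutelyContinuousOnInterval hx).integral_deriv_mul_eq_sub
      (hg.absolutelyContinuousOnInterval hx)]
    refine intervalIntegral.integral_congr_ae ?_
    filter_upwards [hf.ae_hasDerivAt, hg.ae_hasDerivAt] with y hfy hgy hy
    rw [uIoc_of_le hx] at hy
    rw [(hfy hy.1).deriv, (hgy hy.1).deriv]

lemma of_continuousOn (hf : ContinuousOn f (Ici 0)) :
    HasWeakDeriv (fun x => ∫ y in (0 : ℝ)..x, f y) f where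
  intervalIntegrable x hx := (hf.mono Icc_subset_Ici_self).intervalIntegrable_of_Icc hx
  eq_add_integral x _ := by simp

lemma hasDerivAt (hf : HasWeakDeriv f f') (hf' : ContinuousOn f' (Ici 0)) {x : ℝ} (hx : 0 < x) :
    HasDerivAt f (f' x) x := by
  have hf'0 : ContinuousOn f' (Ioi 0) := hf'.mono Ioi_subset_Ici_self
  refine ((intervalIntegral.integral_hasDerivAt_right (hf.intervalIntegrable x hx.le)
    (hf'0.stronglyMeasurableAtFilter isOpen_Ioi x hx)
    (hf'0.continuousAt (Ioi_mem_nhds hx))).const_add (f 0)).congr_of_eventuallyEq ?_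
  filter_upwards [Ioi_mem_nhds hx] with y hy using hf.eq_add_integral y (le_of_lt hy)

lemma comp {p p' : ℝ → ℝ} {s : Set ℝ} (hf : HasWeakDeriv f f') (hf' : ContinuousOn f' (Ici 0))
    (hp : ∀ y ∈ s, HasDerivWithinAt p (p' y) s y) (hp' : ContinuousOn p' s)
    (hfs : MapsTo f (Ici 0) s) : HasWeakDeriv (fun x => p (f x)) (fun x => p' (f x) * f' x) := by
  have hint : ∀ x, 0 ≤ x → IntervalIntegrable (fun x => p' (f x) * f' x) volume 0 x := fun x hx =>
    (((hp'.comp hf.continuousOn hfs).mul hf').mono Icc_subset_Ici_self).intervalIntegrable_of_Icc hx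
  have hpc : ContinuousOn (fun x => p (f x)) (Ici 0) :=
    ContinuousOn.comp (fun y hy => (hp y hy).continuousWithinAt) hf.continuousOn hfs
  refine ⟨hint, fun x hx => ?_⟩
  rw [intervalIntegral.integral_eq_sub_of_hasDerivAt_of_le hx (hpc.mono Icc_subset_Ici_self)
    (fun y hy => ?_) (hint x hx), add_sub_cancel]
  exact (hp _ (hfs hy.1.le)).comp_hasDerivAt y (hf.hasDerivAt hf' hy.1)
    (mem_of_superset (Ioi_mem_nhds hy.1) fun z hz => hfs (Ioi_subset_Ici_self hz))

end HasWeakDeriv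

lemma memHw0_iff {w f f' : ℝ → ℝ} (hw : AEMeasurable w (volume.restrict (Ioi 0))) :
    MemHw0 w f f' ↔
      HasWeakDeriv f f' ∧ MemLp f' 2 (weightMeasure w) ∧ Tendsto f atTop (nhds 0) := by
  have henergy : ∫⁻ x in Ioi 0, ENNReal.ofReal (f' x ^ 2 * w x) < ⊤ ↔
      eLpNorm f' 2 (weightMeasure w) < ⊤ := by
    simp [lintegral_sq_mul_eq_eLpNorm_sq hw, lt_top_iff_ne_top]
  constructor
  · rintro ⟨hint, heq, hlt, hlim⟩
    have hf : HasWeakDeriv f f' := ⟨hint, heq⟩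
    exact ⟨hf, ⟨hf.aestronglyMeasurable.mono_ac (weightMeasure_absolutelyContinuous w),
      henergy.1 hlt⟩, hlim⟩
  · rintro ⟨⟨hint, heq⟩, hf', hlim⟩
    exact ⟨hint, heq, henergy.2 hf'.2, hlim⟩

/-- A positive nondecreasing function on `ℝ₊` with `w^{-1/3} ∈ L¹(ℝ₊)`: a weight in the sense of
`IsWeight` without smoothness and without the normalisation `1 ≤ w`. -/
structure IsMonotoneWeight (w : ℝ → ℝ) : Prop where
  pos : ∀ x, 0 ≤ x → 0 < w x
  monotoneOn : MonotoneOn w (Ici 0)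
  integrableOn_rpow : IntegrableOn (fun x => w x ^ (-(1 / 3 : ℝ))) (Ioi 0)

lemma IsWeight.isMonotoneWeight {w : ℝ → ℝ} (hw : IsWeight w) : IsMonotoneWeight w :=
  ⟨fun x hx => one_pos.trans_le (hw.1 x hx), hw.2.1, hw.2.2.2⟩

/-- The function `w^{-1/3}`, the decay rate of the elements of `H_w⁰`. -/
noncomputable def cubeRootInv (w : ℝ → ℝ) (x : ℝ) : ℝ := w x ^ (-(1 / 3 : ℝ))

/-- The norm of `w^{-2/3}` in `L²(w dx)`, the constant in the decay estimate
`|f| ≤ decayConst w * ‖f‖_w * w^{-1/3}`. -/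
noncomputable def decayConst (w : ℝ → ℝ) : ℝ :=
  lpNorm (fun x => cubeRootInv w x ^ 2) 2 (weightMeasure w)

lemma decayConst_nonneg (w : ℝ → ℝ) : 0 ≤ decayConst w := lpNorm_nonneg

/-- The constant in the bound `|∫₀ˣ f| ≤ primitiveConst w * ‖f‖_w`. -/
noncomputable def primitiveConst (w : ℝ → ℝ) : ℝ :=
  decayConst w * ∫ t in Ioi 0, cubeRootInv w t

namespace IsMonotoneWeight

variable {w f : ℝ → ℝ} {x y : ℝ}

lemma aemeasurable (hw : IsMonotoneWeight w) : AEMeasurable w (volume.restrict (Ioi 0)) :=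
  aemeasurable_restrict_of_monotoneOn measurableSet_Ioi (hw.monotoneOn.mono Ioi_subset_Ici_self)

lemma cubeRootInv_pos (hw : IsMonotoneWeight w) (hx : 0 ≤ x) : 0 < cubeRootInv w x :=
  Real.rpow_pos_of_pos (hw.pos x hx) _

lemma cubeRootInv_pow_three (hw : IsMonotoneWeight w) (hx : 0 ≤ x) :
    cubeRootInv w x ^ 3 = (w x)⁻¹ := by
  rw [cubeRootInv, ← Real.rpow_mul_natCast (hw.pos x hx).le, ← Real.rpow_neg_one]
  norm_num

lemma antitoneOn_cubeRootInv (hw : IsMonotoneWeight w) : AntitoneOn (cubeRootInv w) (Ici 0) :=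
  fun x hx y hy hxy =>
    Real.rpow_le_rpow_of_nonpos (hw.pos x hx) (hw.monotoneOn hx hy hxy) (by norm_num)

lemma integrableOn_cubeRootInv (hw : IsMonotoneWeight w) :
    IntegrableOn (cubeRootInv w) (Ioi 0) := hw.integrableOn_rpow

lemma primitiveConst_nonneg (hw : IsMonotoneWeight w) : 0 ≤ primitiveConst w :=
  mul_nonneg (decayConst_nonneg w)
    (setIntegral_nonneg measurableSet_Ioi fun _ ht => (hw.cubeRootInv_pos (le_of_lt ht)).le)

lemma integrable_weightMeasure_iff (hw : IsMonotoneWeight w) :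
    Integrable f (weightMeasure w) ↔ IntegrableOn (fun t => w t * f t) (Ioi 0) := by
  rw [weightMeasure, integrable_withDensity_iff_integrable_smul₀' hw.aemeasurable.ennreal_ofReal
    (by simp)]
  refine integrableOn_congr_fun (fun t ht => ?_) measurableSet_Ioi
  rw [ENNReal.toReal_ofReal (hw.pos t (le_of_lt ht)).le, smul_eq_mul]

lemma integral_weightMeasure (hw : IsMonotoneWeight w) :
    ∫ t, f t ∂weightMeasure w = ∫ t in Ioi 0, w t * f t := by
  rw [weightMeasure, integral_withDensity_eq_integral_toReal_smul₀ hw.aemeasurable.ennreal_ofReal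
    (by simp)]
  refine setIntegral_congr_fun measurableSet_Ioi fun t ht => ?_
  rw [ENNReal.toReal_ofReal (hw.pos t (le_of_lt ht)).le, smul_eq_mul]

lemma memLp_sq_cubeRootInv (hw : IsMonotoneWeight w) :
    MemLp (fun t => cubeRootInv w t ^ 2) 2 (weightMeasure w) := by
  refine (memLp_two_iff_integrable_sq ((hw.integrableOn_cubeRootInv.1.pow 2).mono_ac
    (weightMeasure_absolutelyContinuous w))).2 ?_
  rw [hw.integrable_weightMeasure_iff]
  refine hw.integrableOn_cubeRootInv.congr_fun (fun t (ht : 0 < t) => ?_) measurableSet_Ioi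
  calc cubeRootInv w t = w t * (w t)⁻¹ * cubeRootInv w t := by
        rw [mul_inv_cancel₀ (hw.pos t ht.le).ne', one_mul]
    _ = w t * (cubeRootInv w t ^ 2) ^ 2 := by rw [← hw.cubeRootInv_pow_three ht.le]; ring

lemma norm_indicator_inv_le (hw : IsMonotoneWeight w) (hx : 0 ≤ x) (hy : 0 < y) :
    ‖(Ioi x).indicator w⁻¹ y‖ ≤ cubeRootInv w x * ‖cubeRootInv w y ^ 2‖ := by
  have hvx := hw.cubeRootInv_pos hx
  by_cases hxy : y ∈ Ioi x
  · rw [indicator_of_mem hxy, Pi.inv_apply, ← hw.cubeRootInv_pow_three hy.le, norm_pow, norm_pow,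
      Real.norm_of_nonneg (hw.cubeRootInv_pos hy.le).le, pow_succ']
    gcongr
    exact hw.antitoneOn_cubeRootInv hx hy.le (le_of_lt hxy)
  · rw [indicator_of_notMem hxy, norm_zero]
    positivity

lemma memLp_indicator_inv (hw : IsMonotoneWeight w) (hx : 0 ≤ x) :
    MemLp ((Ioi x).indicator w⁻¹) 2 (weightMeasure w) :=
  hw.memLp_sq_cubeRootInv.of_le_mul ((hw.aemeasurable.inv.indicator
      measurableSet_Ioi).aestronglyMeasurable.mono_ac (weightMeasure_absolutelyContinuous w))
    (ae_weightMeasure_of_forall_pos fun _ hy => hw.norm_indicator_inv_le hx hy)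

lemma lpNorm_indicator_inv_le (hw : IsMonotoneWeight w) (hx : 0 ≤ x) :
    lpNorm ((Ioi x).indicator w⁻¹) 2 (weightMeasure w) ≤ cubeRootInv w x * decayConst w :=
  lpNorm_le_mul_of_ae_le_mul (hw.cubeRootInv_pos hx).le hw.memLp_sq_cubeRootInv
    (ae_weightMeasure_of_forall_pos fun _ hy => hw.norm_indicator_inv_le hx hy)

lemma mul_mul_indicator_inv (hw : IsMonotoneWeight w) (f : ℝ → ℝ) (hy : 0 < y) :
    w y * (f y * (Ioi x).indicator w⁻¹ y) = (Ioi x).indicator f y := by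
  by_cases hxy : y ∈ Ioi x
  · rw [indicator_of_mem hxy, indicator_of_mem hxy, Pi.inv_apply, mul_left_comm,
      mul_inv_cancel₀ (hw.pos y hy.le).ne', mul_one]
  · simp [indicator_of_notMem hxy]

lemma integrableOn_Ioi_of_memLp (hw : IsMonotoneWeight w) (hf : MemLp f 2 (weightMeasure w))
    (hx : 0 ≤ x) : IntegrableOn f (Ioi x) := by
  have hint : IntegrableOn ((Ioi x).indicator f) (Ioi 0) :=
    (hw.integrable_weightMeasure_iff.1 (hf.integrable_mul (hw.memLp_indicator_inv hx))).congr_fun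
      (fun _ hy => hw.mul_mul_indicator_inv f hy) measurableSet_Ioi
  rwa [IntegrableOn, integrable_indicator_iff measurableSet_Ioi, IntegrableOn,
    Measure.restrict_restrict_of_subset (Ioi_subset_Ioi hx)] at hint

lemma setIntegral_Ioi_norm_le_of_memLp (hw : IsMonotoneWeight w)
    (hf : MemLp f 2 (weightMeasure w)) (hx : 0 ≤ x) :
    ∫ t in Ioi x, ‖f t‖ ≤ decayConst w * lpNorm f 2 (weightMeasure w) * cubeRootInv w x :=
  calc ∫ t in Ioi x, ‖f t‖ = ∫ t in Ioi 0, (Ioi x).indicator (fun t => ‖f t‖) t := by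
        rw [setIntegral_indicator measurableSet_Ioi, inter_eq_right.2 (Ioi_subset_Ioi hx)]
    _ = ∫ t, ‖f t‖ * ‖(Ioi x).indicator w⁻¹ t‖ ∂weightMeasure w := by
        rw [hw.integral_weightMeasure]
        refine setIntegral_congr_fun measurableSet_Ioi fun t ht => ?_
        have hnn : 0 ≤ (Ioi x).indicator w⁻¹ t :=
          indicator_apply_nonneg fun _ => (inv_pos.2 (hw.pos t (le_of_lt ht))).le
        rw [← hw.mul_mul_indicator_inv _ ht, Real.norm_of_nonneg hnn]
    _ ≤ lpNorm f 2 (weightMeasure w) * lpNorm ((Ioi x).indicator w⁻¹) 2 (weightMeasure w) :=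
        integral_norm_mul_norm_le_lpNorm_two_mul_lpNorm_two hf (hw.memLp_indicator_inv hx)
    _ ≤ lpNorm f 2 (weightMeasure w) * (cubeRootInv w x * decayConst w) := by
        gcongr
        · exact lpNorm_nonneg
        · exact hw.lpNorm_indicator_inv_le hx
    _ = _ := by ring

end IsMonotoneWeight

lemma HasWeakDeriv.eq_neg_setIntegral_Ioi {f f' : ℝ → ℝ} (hf : HasWeakDeriv f f')
    (hlim : Tendsto f atTop (nhds 0)) {x : ℝ} (hx : 0 ≤ x) (hf' : IntegrableOn f' (Ioi x)) :
    f x = -∫ t in Ioi x, f' t := by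
  have hlim' : Tendsto (fun y => f y - f x) atTop (nhds (∫ t in Ioi x, f' t)) := by
    refine (intervalIntegral_tendsto_integral_Ioi x hf' tendsto_id).congr' ?_
    filter_upwards [eventually_ge_atTop 0] with y hy using (hf.sub_eq_integral hx hy).symm
  have := tendsto_nhds_unique (hlim.sub_const (f x)) hlim'
  linarith

namespace MemHw0

variable {w f f' g g' : ℝ → ℝ} {x : ℝ}

lemma hasWeakDeriv (hf : MemHw0 w f f') : HasWeakDeriv f f' := ⟨hf.1, hf.2.1⟩

lemma memLp (hw : AEMeasurable w (volume.restrict (Ioi 0))) (hf : MemHw0 w f f') :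
    MemLp f' 2 (weightMeasure w) :=
  ((memHw0_iff hw).1 hf).2.1

lemma tendsto_zero (hf : MemHw0 w f f') : Tendsto f atTop (nhds 0) := hf.2.2.2

lemma nw_eq_lpNorm (hw : AEMeasurable w (volume.restrict (Ioi 0))) (hf : MemHw0 w f f') :
    nw w f' = lpNorm f' 2 (weightMeasure w) :=
  _root_.nw_eq_lpNorm hw (hf.memLp hw).1

lemma sub (hw : AEMeasurable w (volume.restrict (Ioi 0))) (hf : MemHw0 w f f')
    (hg : MemHw0 w g g') : MemHw0 w (fun x => f x - g x) (fun x => f' x - g' x) :=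
  (memHw0_iff hw).2 ⟨hf.hasWeakDeriv.sub hg.hasWeakDeriv, (hf.memLp hw).sub (hg.memLp hw), by
    simpa using hf.tendsto_zero.sub hg.tendsto_zero⟩

lemma sum {ι : Type*} {s : Finset ι} {f f' : ι → ℝ → ℝ}
    (hw : AEMeasurable w (volume.restrict (Ioi 0))) (hf : ∀ i ∈ s, MemHw0 w (f i) (f' i)) :
    MemHw0 w (fun x => ∑ i ∈ s, f i x) (fun x => ∑ i ∈ s, f' i x) :=
  (memHw0_iff hw).2 ⟨HasWeakDeriv.sum fun i hi => (hf i hi).hasWeakDeriv,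
    memLp_finsetSum s fun i hi => (hf i hi).memLp hw, by
    simpa using tendsto_finsetSum s fun i hi => (hf i hi).tendsto_zero⟩

lemma nw_sum_le {ι : Type*} {s : Finset ι} {f f' : ι → ℝ → ℝ}
    (hw : AEMeasurable w (volume.restrict (Ioi 0))) (hf : ∀ i ∈ s, MemHw0 w (f i) (f' i)) :
    nw w (fun x => ∑ i ∈ s, f' i x) ≤ ∑ i ∈ s, nw w (f' i) := by
  rw [(MemHw0.sum hw hf).nw_eq_lpNorm hw,
    Finset.sum_congr rfl fun i hi => (hf i hi).nw_eq_lpNorm hw]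
  simpa only [← Finset.sum_fn] using
    lpNorm_sum_le (fun i hi => (hf i hi).memLp hw) one_le_two

lemma abs_le (hw : IsMonotoneWeight w) (hf : MemHw0 w f f') (hx : 0 ≤ x) :
    |f x| ≤ decayConst w * nw w f' * cubeRootInv w x := by
  have hf' := hf.memLp hw.aemeasurable
  rw [hf.hasWeakDeriv.eq_neg_setIntegral_Ioi hf.tendsto_zero hx
    (hw.integrableOn_Ioi_of_memLp hf' hx), abs_neg, hf.nw_eq_lpNorm hw.aemeasurable]
  exact (norm_integral_le_integral_norm f').trans (hw.setIntegral_Ioi_norm_le_of_memLp hf' hx)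

lemma abs_integral_le (hw : IsMonotoneWeight w) (hf : MemHw0 w f f') (hx : 0 ≤ x) :
    |∫ t in (0 : ℝ)..x, f t| ≤ primitiveConst w * nw w f' := by
  have hbound : IntegrableOn (fun t => decayConst w * nw w f' * cubeRootInv w t) (Ioi 0) :=
    hw.integrableOn_cubeRootInv.const_mul _
  calc |∫ t in (0 : ℝ)..x, f t|
      ≤ ∫ t in Ioc 0 x, |f t| := by
        rw [intervalIntegral.integral_of_le hx]
        exact abs_integral_le_integral_abs
    _ ≤ ∫ t in Ioc 0 x, decayConst w * nw w f' * cubeRootInv w t :=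
        setIntegral_mono_on ((hf.hasWeakDeriv.intervalIntegrable_self hx).1.abs)
          (hbound.mono_set Ioc_subset_Ioi_self) measurableSet_Ioc
          fun t ht => hf.abs_le hw ht.1.le
    _ ≤ ∫ t in Ioi 0, decayConst w * nw w f' * cubeRootInv w t := by
        refine setIntegral_mono_set hbound ?_ Ioc_subset_Ioi_self.eventuallyLE
        filter_upwards [ae_restrict_mem measurableSet_Ioi] with t ht
        exact (abs_nonneg _).trans (hf.abs_le hw (le_of_lt ht))
    _ = _ := by rw [integral_const_mul, primitiveConst]; ring

lemma norm_mul_le (hw : IsMonotoneWeight w) (hf : MemHw0 w f f') (hg : MemHw0 w g g')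
    (hx : 0 < x) : ‖f x * g x‖ ≤
      decayConst w ^ 2 * nw w f' * nw w g' * ‖cubeRootInv w x ^ 2‖ := by
  calc ‖f x * g x‖ = |f x| * |g x| := abs_mul _ _
    _ ≤ (decayConst w * nw w f' * cubeRootInv w x) * (decayConst w * nw w g' * cubeRootInv w x) :=
        mul_le_mul (hf.abs_le hw hx.le) (hg.abs_le hw hx.le) (abs_nonneg _)
          ((abs_nonneg _).trans (hf.abs_le hw hx.le))
    _ = _ := by rw [Real.norm_of_nonneg (sq_nonneg _)]; ring

lemma memLp_mul (hw : IsMonotoneWeight w) (hf : MemHw0 w f f') (hg : MemHw0 w g g') :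
    MemLp (fun x => f x * g x) 2 (weightMeasure w) := by
  have hmeas : AEStronglyMeasurable (fun x => f x * g x) (volume.restrict (Ioi 0)) :=
    ((hf.hasWeakDeriv.continuousOn.mul hg.hasWeakDeriv.continuousOn).mono
      Ioi_subset_Ici_self).aestronglyMeasurable measurableSet_Ioi
  exact hw.memLp_sq_cubeRootInv.of_le_mul
    (hmeas.mono_ac (weightMeasure_absolutelyContinuous w))
    (ae_weightMeasure_of_forall_pos fun x hx => hf.norm_mul_le hw hg hx)

lemma lpNorm_mul_le (hw : IsMonotoneWeight w) (hf : MemHw0 w f f') (hg : MemHw0 w g g') :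
    lpNorm (fun x => f x * g x) 2 (weightMeasure w) ≤ decayConst w ^ 3 * nw w f' * nw w g' := by
  refine (lpNorm_le_mul_of_ae_le_mul ?_ hw.memLp_sq_cubeRootInv
    (ae_weightMeasure_of_forall_pos fun x hx => hf.norm_mul_le hw hg hx)).trans_eq ?_
  · have := decayConst_nonneg w; have := nw_nonneg w f'; have := nw_nonneg w g'; positivity
  · rw [← decayConst]
    ring

end MemHw0

/-- The function `x ↦ -∫₀ˣ h(η) dη`, at which the maps `Ψᵢ'` are evaluated in `Σh`. -/
noncomputable def negPrimitive (h : ℝ → ℝ) (x : ℝ) : ℝ := -∫ y in (0 : ℝ)..x, h y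

lemma hasWeakDeriv_negPrimitive {h : ℝ → ℝ} (hh : ContinuousOn h (Ici 0)) :
    HasWeakDeriv (negPrimitive h) fun x => -h x :=
  (HasWeakDeriv.of_continuousOn hh).neg

lemma MemHw0.abs_negPrimitive_sub_le {w g g' h h' : ℝ → ℝ} (hw : IsMonotoneWeight w)
    (hg : MemHw0 w g g') (hh : MemHw0 w h h') {x : ℝ} (hx : 0 ≤ x) :
    |negPrimitive g x - negPrimitive h x| ≤
      primitiveConst w * nw w fun x => g' x - h' x := by
  rw [negPrimitive, negPrimitive, ← neg_sub', abs_neg, ← intervalIntegral.integral_sub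
    (hg.hasWeakDeriv.intervalIntegrable_self hx) (hh.hasWeakDeriv.intervalIntegrable_self hx)]
  exact (hg.sub hw.aemeasurable hh).abs_integral_le hw hx

/-- `M` bounds `p` and its derivative `p'` on `s` and is a Lipschitz constant of `p'`. For
`p = Ψ'` and `p' = Ψ''` on an interval this is what bounds on the first three derivatives of `Ψ`
give. -/
structure IsBoundedC11On (p p' : ℝ → ℝ) (s : Set ℝ) (M : NNReal) : Prop where
  hasDerivWithinAt : ∀ y ∈ s, HasDerivWithinAt p (p' y) s y
  norm_le : ∀ y ∈ s, ‖p y‖ ≤ M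
  norm_deriv_le : ∀ y ∈ s, ‖p' y‖ ≤ M
  lipschitzOnWith_deriv : LipschitzOnWith M p' s

lemma IsBoundedC11On.lipschitzOnWith {p p' : ℝ → ℝ} {s : Set ℝ} {M : NNReal}
    (hp : IsBoundedC11On p p' s M) (hs : Convex ℝ s) : LipschitzOnWith M p s :=
  hs.lipschitzOnWith_of_nnnorm_hasDerivWithin_le hp.hasDerivWithinAt hp.norm_deriv_le

lemma exists_isBoundedC11On_of_lipschitzOnWith {p p' : ℝ → ℝ} {s : Set ℝ} {K : NNReal}
    (hs : IsCompact s) (hp : ∀ y ∈ s, HasDerivWithinAt p (p' y) s y)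
    (hp' : LipschitzOnWith K p' s) : ∃ M, IsBoundedC11On p p' s M := by
  obtain ⟨A, hA⟩ := hs.exists_bound_of_continuousOn fun y hy => (hp y hy).continuousWithinAt
  obtain ⟨B, hB⟩ := hs.exists_bound_of_continuousOn hp'.continuousOn
  have hAM : A ≤ ↑(A.toNNReal + B.toNNReal + K) := by
    push_cast; linarith [le_coe_toNNReal A, B.toNNReal.coe_nonneg, K.coe_nonneg]
  have hBM : B ≤ ↑(A.toNNReal + B.toNNReal + K) := by
    push_cast; linarith [le_coe_toNNReal B, A.toNNReal.coe_nonneg, K.coe_nonneg]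
  exact ⟨A.toNNReal + B.toNNReal + K, hp, fun y hy => (hA y hy).trans hAM,
    fun y hy => (hB y hy).trans hBM, hp'.weaken le_add_self⟩

lemma exists_isBoundedC11On_deriv {Ψ : ℝ → ℝ} {U s : Set ℝ} (hU : IsOpen U)
    (hΨ : ContDiffOn ℝ 3 Ψ U) (hs : IsCompact s) (hconv : Convex ℝ s) (hsU : s ⊆ U) :
    ∃ M, IsBoundedC11On (deriv Ψ) (deriv (deriv Ψ)) s M := by
  have hΨ' : ContDiffOn ℝ 2 (deriv Ψ) U := hΨ.deriv_of_isOpen hU (by norm_num)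
  have hΨ'' : ContDiffOn ℝ 1 (deriv (deriv Ψ)) U := hΨ'.deriv_of_isOpen hU (by norm_num)
  obtain ⟨K, hK⟩ := (hΨ''.mono hsU).exists_lipschitzOnWith one_ne_zero hconv hs
  refine exists_isBoundedC11On_of_lipschitzOnWith hs (fun y hy => ?_) hK
  exact ((hΨ'.differentiableOn two_ne_zero).differentiableAt
    (hU.mem_nhds (hsU hy))).hasDerivAt.hasDerivWithinAt

/-- The weak derivative `-h' p(-∫₀ˣ h) + h² p'(-∫₀ˣ h)` of the summand `-h p(-∫₀ˣ h)` of `Σh`. -/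
noncomputable def summandDeriv (p p' h h' : ℝ → ℝ) (x : ℝ) : ℝ :=
  -(h' x) * p (negPrimitive h x) + h x ^ 2 * p' (negPrimitive h x)

section Summand

variable {w p p' h h' : ℝ → ℝ} {s : Set ℝ} {M : NNReal}

lemma continuousOn_comp_negPrimitive (hh : ContinuousOn h (Ici 0)) (hp : ContinuousOn p s)
    (hhs : MapsTo (negPrimitive h) (Ici 0) s) :
    ContinuousOn (fun x => p (negPrimitive h x)) (Ici 0) :=
  hp.comp (hasWeakDeriv_negPrimitive hh).continuousOn hhs

lemma memLp_mul_comp_negPrimitive (hh : ContinuousOn h (Ici 0)) (hp : ContinuousOn p s)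
    (hpM : ∀ y ∈ s, ‖p y‖ ≤ M) (hhs : MapsTo (negPrimitive h) (Ici 0) s) {F : ℝ → ℝ}
    (hF : MemLp F 2 (weightMeasure w)) :
    MemLp (fun x => F x * p (negPrimitive h x)) 2 (weightMeasure w) := by
  have hmeas : AEStronglyMeasurable (fun x => p (negPrimitive h x)) (weightMeasure w) :=
    (((continuousOn_comp_negPrimitive hh hp hhs).mono
      Ioi_subset_Ici_self).aestronglyMeasurable measurableSet_Ioi).mono_ac
      (weightMeasure_absolutelyContinuous w)
  refine hF.of_le_mul (hF.1.mul hmeas) (c := M)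
    (ae_weightMeasure_of_forall_pos fun x hx => ?_)
  rw [norm_mul, mul_comm]
  exact mul_le_mul_of_nonneg_right (hpM _ (hhs hx.le)) (norm_nonneg _)

lemma HasWeakDeriv.summand (hh : HasWeakDeriv h h') (hp : IsBoundedC11On p p' s M)
    (hhs : MapsTo (negPrimitive h) (Ici 0) s) :
    HasWeakDeriv (fun x => -(h x * p (negPrimitive h x))) (summandDeriv p p' h h') := by
  have hcont := hh.continuousOn
  convert (hh.mul ((hasWeakDeriv_negPrimitive hcont).comp hcont.neg
    hp.hasDerivWithinAt hp.lipschitzOnWith_deriv.continuousOn hhs)).neg using 2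
  rw [summandDeriv]
  ring

end Summand

namespace MemHw0

variable {w p p' g g' h h' : ℝ → ℝ} {s : Set ℝ} {M : NNReal}

lemma memLp_sq (hw : IsMonotoneWeight w) (hh : MemHw0 w h h') :
    MemLp (fun x => h x ^ 2) 2 (weightMeasure w) := by
  simpa only [sq] using hh.memLp_mul hw hh

lemma summand (hw : IsMonotoneWeight w) (hh : MemHw0 w h h') (hp : IsBoundedC11On p p' s M)
    (hhs : MapsTo (negPrimitive h) (Ici 0) s) :
    MemHw0 w (fun x => -(h x * p (negPrimitive h x))) (summandDeriv p p' h h') := by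
  have hcont := hh.hasWeakDeriv.continuousOn
  have hbdd : IsBoundedUnder (· ≤ ·) atTop (norm ∘ fun x => p (negPrimitive h x)) :=
    isBoundedUnder_of_eventually_le ((eventually_ge_atTop 0).mono fun x hx => hp.norm_le _ (hhs hx))
  refine (memHw0_iff hw.aemeasurable).2 ⟨hh.hasWeakDeriv.summand hp hhs, ?_, ?_⟩
  · have hpc : ContinuousOn p s := fun y hy => (hp.hasDerivWithinAt y hy).continuousWithinAt
    exact (memLp_mul_comp_negPrimitive hcont hpc hp.norm_le hhs (hh.memLp hw.aemeasurable).neg).add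
      (memLp_mul_comp_negPrimitive hcont hp.lipschitzOnWith_deriv.continuousOn hp.norm_deriv_le hhs
        (hh.memLp_sq hw))
  · simpa using (hh.tendsto_zero.zero_mul_isBoundedUnder_le hbdd).neg

lemma lpNorm_mul_comp_negPrimitive_sub_le (hw : IsMonotoneWeight w) (hg : MemHw0 w g g')
    (hh : MemHw0 w h h') (hp : LipschitzOnWith M p s) (hpM : ∀ y ∈ s, ‖p y‖ ≤ M)
    (hgs : MapsTo (negPrimitive g) (Ici 0) s) (hhs : MapsTo (negPrimitive h) (Ici 0) s)
    {F G : ℝ → ℝ} (hF : MemLp F 2 (weightMeasure w)) (hG : MemLp G 2 (weightMeasure w)) :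
    lpNorm (fun x => F x * p (negPrimitive g x) - G x * p (negPrimitive h x)) 2 (weightMeasure w)
      ≤ M * (primitiveConst w * nw w fun x => g' x - h' x) * lpNorm F 2 (weightMeasure w) +
          M * lpNorm (fun x => F x - G x) 2 (weightMeasure w) := by
  have hδ := (abs_nonneg _).trans (hg.abs_negPrimitive_sub_le hw hh le_rfl)
  have hcomp : ∀ x, 0 < x → ‖p (negPrimitive g x) - p (negPrimitive h x)‖ ≤
      M * (primitiveConst w * nw w fun x => g' x - h' x) := fun x hx =>
    (hp.norm_sub_le (hgs hx.le) (hhs hx.le)).trans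
      (mul_le_mul_of_nonneg_left (hg.abs_negPrimitive_sub_le hw hh hx.le) M.coe_nonneg)
  have hbound := lpNorm_smul_sub_smul_le one_le_two (mul_nonneg M.coe_nonneg hδ) M.coe_nonneg hF hG
    (ae_weightMeasure_of_forall_pos hcomp)
    (ae_weightMeasure_of_forall_pos fun x hx => hpM _ (hhs hx.le))
  simpa only [smul_eq_mul, mul_comm (p _)] using hbound

lemma lpNorm_sq_sub_sq_le (hw : IsMonotoneWeight w) (hg : MemHw0 w g g') (hh : MemHw0 w h h') :
    lpNorm (fun x => g x ^ 2 - h x ^ 2) 2 (weightMeasure w) ≤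
      decayConst w ^ 3 * (nw w g' + nw w h') * nw w fun x => g' x - h' x := by
  have hd := hg.sub hw.aemeasurable hh
  calc lpNorm (fun x => g x ^ 2 - h x ^ 2) 2 (weightMeasure w)
      = lpNorm ((fun x => g x * (g x - h x)) + fun x => h x * (g x - h x)) 2 (weightMeasure w) := by
        congr 1 with x
        simp only [Pi.add_apply]
        ring
    _ ≤ _ := lpNorm_add_le (hg.memLp_mul hw hd) one_le_two
    _ ≤ _ := add_le_add (hg.lpNorm_mul_le hw hd) (hh.lpNorm_mul_le hw hd)
    _ = _ := by ring

lemma lpNorm_neg_mul_comp_sub_le (hw : IsMonotoneWeight w) (hg : MemHw0 w g g')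
    (hh : MemHw0 w h h') (hp : LipschitzOnWith M p s) (hpM : ∀ y ∈ s, ‖p y‖ ≤ M)
    (hgs : MapsTo (negPrimitive g) (Ici 0) s) (hhs : MapsTo (negPrimitive h) (Ici 0) s) :
    lpNorm (fun x => -g' x * p (negPrimitive g x) - -h' x * p (negPrimitive h x)) 2
        (weightMeasure w)
      ≤ M * (primitiveConst w * nw w g' + 1) * nw w fun x => g' x - h' x := by
  have hneg : lpNorm (-g') 2 (weightMeasure w) = nw w g' := by
    rw [lpNorm_neg, hg.nw_eq_lpNorm hw.aemeasurable]
  have hnegsub : lpNorm (fun x => -g' x - -h' x) 2 (weightMeasure w) =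
      nw w fun x => g' x - h' x := by
    rw [(hg.sub hw.aemeasurable hh).nw_eq_lpNorm hw.aemeasurable, ← lpNorm_neg]
    congr 1 with x
    simp only [Pi.neg_apply]
    ring
  refine (hg.lpNorm_mul_comp_negPrimitive_sub_le hw hh hp hpM hgs hhs
    (hg.memLp hw.aemeasurable).neg (hh.memLp hw.aemeasurable).neg).trans_eq ?_
  simp only [Pi.neg_apply, hneg, hnegsub]
  ring

lemma lpNorm_sq_mul_comp_sub_le (hw : IsMonotoneWeight w) (hg : MemHw0 w g g')
    (hh : MemHw0 w h h') (hp : LipschitzOnWith M p s) (hpM : ∀ y ∈ s, ‖p y‖ ≤ M)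
    (hgs : MapsTo (negPrimitive g) (Ici 0) s) (hhs : MapsTo (negPrimitive h) (Ici 0) s) :
    lpNorm (fun x => g x ^ 2 * p (negPrimitive g x) - h x ^ 2 * p (negPrimitive h x)) 2
        (weightMeasure w)
      ≤ M * decayConst w ^ 3 * (primitiveConst w * nw w g' ^ 2 + nw w g' + nw w h') *
          nw w fun x => g' x - h' x := by
  have hsq : lpNorm (fun x => g x ^ 2) 2 (weightMeasure w) ≤
      decayConst w ^ 3 * nw w g' * nw w g' := by
    simpa only [sq] using hg.lpNorm_mul_le hw hg
  have hδ := (abs_nonneg _).trans (hg.abs_negPrimitive_sub_le hw hh le_rfl)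
  refine (hg.lpNorm_mul_comp_negPrimitive_sub_le hw hh hp hpM hgs hhs (hg.memLp_sq hw)
    (hh.memLp_sq hw)).trans ?_
  refine (add_le_add (mul_le_mul_of_nonneg_left hsq (mul_nonneg M.coe_nonneg hδ))
    (mul_le_mul_of_nonneg_left (hg.lpNorm_sq_sub_sq_le hw hh) M.coe_nonneg)).trans_eq ?_
  ring

end MemHw0

/-- The constant in the Lipschitz estimate for a summand of `Σ`, up to the factor `M` of
`IsBoundedC11On`. -/
noncomputable def summandConst (w : ℝ → ℝ) : ℝ :=
  (1 + primitiveConst w) * (1 + decayConst w ^ 3)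

lemma IsMonotoneWeight.summandConst_nonneg {w : ℝ → ℝ} (hw : IsMonotoneWeight w) :
    0 ≤ summandConst w := by
  have hdecay := decayConst_nonneg w
  have hprim := hw.primitiveConst_nonneg
  unfold summandConst
  positivity

lemma IsMonotoneWeight.add_le_summandConst_mul {w : ℝ → ℝ} (hw : IsMonotoneWeight w) {a b : ℝ}
    (ha : 0 ≤ a) (hb : 0 ≤ b) :
    primitiveConst w * a + 1 + decayConst w ^ 3 * (primitiveConst w * a ^ 2 + a + b)
      ≤ summandConst w * (1 + b + a + a ^ 2) := by
  have hdecay := decayConst_nonneg w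
  have hprim := hw.primitiveConst_nonneg
  rw [summandConst, ← sub_nonneg]
  ring_nf
  positivity

lemma MemHw0.nw_summandDeriv_sub_le {w p p' g g' h h' : ℝ → ℝ} {s : Set ℝ} {M : NNReal}
    (hw : IsMonotoneWeight w) (hg : MemHw0 w g g') (hh : MemHw0 w h h') (hs : Convex ℝ s)
    (hp : IsBoundedC11On p p' s M)
    (hgs : MapsTo (negPrimitive g) (Ici 0) s) (hhs : MapsTo (negPrimitive h) (Ici 0) s) :
    nw w (fun x => summandDeriv p p' g g' x - summandDeriv p p' h h' x) ≤
      M * summandConst w * ((1 + nw w h' + nw w g' + nw w g' ^ 2) *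
        nw w fun x => g' x - h' x) := by
  have hpc := hp.lipschitzOnWith hs
  have hlinear : MemLp (fun x => -g' x * p (negPrimitive g x) - -h' x * p (negPrimitive h x)) 2
      (weightMeasure w) :=
    (memLp_mul_comp_negPrimitive hg.hasWeakDeriv.continuousOn hpc.continuousOn hp.norm_le hgs
      (hg.memLp hw.aemeasurable).neg).sub
    (memLp_mul_comp_negPrimitive hh.hasWeakDeriv.continuousOn hpc.continuousOn hp.norm_le hhs
      (hh.memLp hw.aemeasurable).neg)
  rw [((hg.summand hw hp hgs).sub hw.aemeasurable (hh.summand hw hp hhs)).nw_eq_lpNorm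
    hw.aemeasurable]
  calc lpNorm (fun x => summandDeriv p p' g g' x - summandDeriv p p' h h' x) 2 (weightMeasure w)
      = lpNorm ((fun x => -g' x * p (negPrimitive g x) - -h' x * p (negPrimitive h x)) + fun x =>
          g x ^ 2 * p' (negPrimitive g x) - h x ^ 2 * p' (negPrimitive h x)) 2
          (weightMeasure w) := by
        congr 1 with x
        exact add_sub_add_comm _ _ _ _
    _ ≤ _ := lpNorm_add_le hlinear one_le_two
    _ ≤ _ := add_le_add (hg.lpNorm_neg_mul_comp_sub_le hw hh hpc hp.norm_le hgs hhs)
        (hg.lpNorm_sq_mul_comp_sub_le hw hh hp.lipschitzOnWith_deriv hp.norm_deriv_le hgs hhs)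
    _ = M * (primitiveConst w * nw w g' + 1 +
          decayConst w ^ 3 * (primitiveConst w * nw w g' ^ 2 + nw w g' + nw w h')) *
          nw w fun x => g' x - h' x := by ring
    _ ≤ M * (summandConst w * (1 + nw w h' + nw w g' + nw w g' ^ 2)) *
          nw w fun x => g' x - h' x := by
        gcongr
        · exact nw_nonneg _ _
        · exact hw.add_le_summandConst_mul (nw_nonneg _ _) (nw_nonneg _ _)
    _ = _ := by ring

theorem stmt_13_general {ι : Type*} [Fintype ι] {w : ℝ → ℝ} (hw : IsMonotoneWeight w)
    {s : ι → Set ℝ} (hs : ∀ i, Convex ℝ (s i)) {p p' : ι → ℝ → ℝ}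
    (hp : ∀ i, ∃ M, IsBoundedC11On (p i) (p' i) (s i) M) :
    (∀ h h' : ι → ℝ → ℝ, (∀ i, MemHw0 w (h i) (h' i)) →
      (∀ i, MapsTo (negPrimitive (h i)) (Ici 0) (s i)) →
      MemHw0 w (fun x => -∑ i, h i x * p i (negPrimitive (h i) x))
        (fun x => ∑ i, summandDeriv (p i) (p' i) (h i) (h' i) x)) ∧
    ∃ C > (0 : ℝ), ∀ g g' h h' : ι → ℝ → ℝ,
      (∀ i, MemHw0 w (g i) (g' i)) → (∀ i, MapsTo (negPrimitive (g i)) (Ici 0) (s i)) →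
      (∀ i, MemHw0 w (h i) (h' i)) → (∀ i, MapsTo (negPrimitive (h i)) (Ici 0) (s i)) →
      nw w (fun x => ∑ i, summandDeriv (p i) (p' i) (g i) (g' i) x -
          ∑ i, summandDeriv (p i) (p' i) (h i) (h' i) x)
        ≤ C * ∑ i, (1 + nw w (h' i) + nw w (g' i) + nw w (g' i) ^ 2) *
            nw w (fun x => g' i x - h' i x) := by
  choose M hM using hp
  have hC : ∀ i, 0 ≤ M i * summandConst w := fun i =>
    mul_nonneg (M i).coe_nonneg hw.summandConst_nonneg
  refine ⟨fun h h' hh hhs => ?_, 1 + ∑ i, M i * summandConst w,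
    add_pos_of_pos_of_nonneg one_pos (Finset.sum_nonneg fun i _ => hC i),
    fun g g' h h' hg hgs hh hhs => ?_⟩
  · simpa only [Finset.sum_neg_distrib] using MemHw0.sum hw.aemeasurable
      fun i (_ : i ∈ Finset.univ) => (hh i).summand hw (hM i) (hhs i)
  · have hle : ∀ i, M i * summandConst w ≤ 1 + ∑ i, M i * summandConst w := fun i => by
      linarith [Finset.single_le_sum (fun j _ => hC j) (Finset.mem_univ i)]
    simp only [← Finset.sum_sub_distrib]
    rw [Finset.mul_sum]
    have hdiff : ∀ i ∈ Finset.univ, MemHw0 w _ fun x =>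
        summandDeriv (p i) (p' i) (g i) (g' i) x - summandDeriv (p i) (p' i) (h i) (h' i) x :=
      fun i _ => ((hg i).summand hw (hM i) (hgs i)).sub hw.aemeasurable
        ((hh i).summand hw (hM i) (hhs i))
    refine (MemHw0.nw_sum_le hw.aemeasurable hdiff).trans (Finset.sum_le_sum fun i _ => ?_)
    refine ((hg i).nw_summandDeriv_sub_le hw (hh i) (hs i) (hM i) (hgs i) (hhs i)).trans
      (mul_le_mul_of_nonneg_right (hle i) ?_)
    have hg0 := nw_nonneg w (g' i)
    have hh0 := nw_nonneg w (h' i)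
    exact mul_nonneg (by positivity) (nw_nonneg _ _)

/-- For every `h ∈ Πᵢ Aᵢ` the function `Σh` belongs to `H_w⁰`, and there is a constant
`C₅ > 0`, depending only on `w`, `n` and `Ψ₁,…,Ψₙ`, such that for all `g, h ∈ Πᵢ Aᵢ`:
`‖Σg - Σh‖_w ≤ C₅ Σᵢ (1 + ‖hᵢ‖_w + ‖gᵢ‖_w + ‖gᵢ‖²_w) ‖gᵢ - hᵢ‖_w`.
In particular `Σ` is continuous. -/
theorem stmt_13 (w : ℝ → ℝ) (hw : IsWeight w) (n : ℕ) (c d : Fin n → ℝ)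
    (hc : ∀ i, c i < 0) (hd : ∀ i, 0 < d i) (Ψ : Fin n → ℝ → ℝ)
    (hΨ : ∀ i, ∃ U : Set ℝ, IsOpen U ∧ Set.Icc (c i) (d i) ⊆ U ∧ ContDiffOn ℝ 3 (Ψ i) U) :
    (∀ h h' : Fin n → ℝ → ℝ, (∀ i, MemHw0 w (h i) (h' i)) → (∀ i, InA (c i) (d i) (h i)) →
      MemHw0 w (SigmaMap Ψ h) (SigmaDeriv Ψ h h')) ∧
    ∃ C₅ > (0 : ℝ), ∀ g g' h h' : Fin n → ℝ → ℝ,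
      (∀ i, MemHw0 w (g i) (g' i)) → (∀ i, InA (c i) (d i) (g i)) →
      (∀ i, MemHw0 w (h i) (h' i)) → (∀ i, InA (c i) (d i) (h i)) →
      nw w (fun x => SigmaDeriv Ψ g g' x - SigmaDeriv Ψ h h' x)
        ≤ C₅ * ∑ i, (1 + nw w (h' i) + nw w (g' i) + nw w (g' i) ^ 2) *
            nw w (fun x => g' i x - h' i x) := by
  exact stmt_13_general hw.isMonotoneWeight (fun i => convex_Icc (c i) (d i)) fun i =>
    let ⟨_, hU, hsU, hΨU⟩ := hΨ i
    exists_isBoundedC11On_deriv hU hΨU isCompact_Icc (convex_Icc _ _) hsU
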